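/- arXiv:2104.02130 — 2 statements merged into one kernel-verified Lean document; each statement's English description precedes it below -/
import Mathlib

section
/- Let μ be a complex regular Borel measure on the unit circle 𝕋 such that ∫_𝕋 ζ^n dμ(ζ) = 0 for every integer n ≥ 0. Then μ is absolutely continuous with respect to the normalized Haar (arc-length) measure λ on 𝕋; that is, μ(E) = 0 for every Borel set E ⊆ 𝕋 with λ(E) = 0. -/
open MeasureTheory

/-!
Write the measure as `h dν` with `ν` finite and `h ∈ L¹(ν)`; the hypothesis says that `h dν`
annihilates every function holomorphic near the closed disc. It suffices that it gives mass zero to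
each compact `λ`-null set `K`. For a neighbourhood `U` of `K` of very small `λ`-measure, let `G` be
the Herglotz transform of `λ|_U`: slightly inside the disc `Re G` is the Poisson integral of the
indicator of `U`, hence at least `1 / 2` near `K`, while `G` is small away from `U`. With a large
constant `N`, the function `N G / (1 + N G)` of a slightly shrunk variable is holomorphic near the
closed disc, bounded by `1`, close to `1` on `K` and close to `0` away from `K`. Letting these
functions tend to the indicator of `K` and integrating against `h dν` gives `∫_K h dν = 0`.
-/

open Filter Metric Topology

section FiniteMeasures

variable {X : Type*} [MeasurableSpace X]

theorem exists_sum_mul_integral_eq_integral_mul {ι : Type*} [Fintype ι] (μ : ι → Measure X)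
    [∀ i, IsFiniteMeasure (μ i)] (c : ι → ℂ) :
    ∃ (ν : Measure X) (h : X → ℂ), IsFiniteMeasure ν ∧ Integrable h ν ∧
      ∀ f : X → ℂ, (∀ i, Integrable f (μ i)) →
        ∑ i, c i * ∫ x, f x ∂μ i = ∫ x, f x * h x ∂ν := by
  set ν := Measure.sum μ
  have h_ac (i : ι) : μ i ≪ ν := Measure.absolutelyContinuous_sum_right i .rfl
  refine ⟨ν, fun x ↦ ∑ i, c i * ((μ i).rnDeriv ν x).toReal, inferInstance,
    integrable_finsetSum _ fun i _ ↦ Measure.integrable_toReal_rnDeriv.ofReal.const_mul (c i),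
    fun f hf ↦ ?_⟩
  have h_int (i : ι) : Integrable (fun x ↦ ((μ i).rnDeriv ν x).toReal • f x) ν :=
    (integrable_rnDeriv_smul_iff (h_ac i)).2 (hf i)
  calc ∑ i, c i * ∫ x, f x ∂μ i
      = ∑ i, ∫ x, c i * (((μ i).rnDeriv ν x).toReal • f x) ∂ν := by
        simp only [integral_const_mul, integral_rnDeriv_smul (h_ac _)]
    _ = ∫ x, ∑ i, c i * (((μ i).rnDeriv ν x).toReal • f x) ∂ν :=
        (integral_finsetSum _ fun i _ ↦ (h_int i).const_mul (c i)).symm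
    _ = ∫ x, f x * ∑ i, c i * ((μ i).rnDeriv ν x).toReal ∂ν := by
        simp only [Finset.mul_sum, Complex.real_smul]
        congr! 3
        ring

theorem setIntegral_eq_zero_of_forall_isCompact_subset [TopologicalSpace X] [T2Space X]
    [OpensMeasurableSpace X] {G : Type*} [NormedAddCommGroup G] [NormedSpace ℝ G] {ν : Measure X}
    [ν.InnerRegularCompactLTTop] {h : X → G} (hh : Integrable h ν) {E : Set X}
    (hE : MeasurableSet E) (hE_fin : ν E ≠ ⊤)
    (h_compact : ∀ K ⊆ E, IsCompact K → ∫ x in K, h x ∂ν = 0) : ∫ x in E, h x ∂ν = 0 := by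
  have (n : ℕ) : ∃ K ⊆ E, IsCompact K ∧ ν (E \ K) < ((n + 1 : ℕ) : ENNReal)⁻¹ :=
    hE.exists_isCompact_sdiff_lt hE_fin (ENNReal.inv_ne_zero.2 (ENNReal.natCast_ne_top _))
  choose K hKE hK hν using this
  have h_small : Tendsto (fun n ↦ ν (E \ K n)) atTop (𝓝 0) :=
    tendsto_of_tendsto_of_tendsto_of_le_of_le tendsto_const_nhds
      (ENNReal.tendsto_inv_nat_nhds_zero.comp (tendsto_add_atTop_nat 1))
      (fun n ↦ zero_le) fun n ↦ (hν n).le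
  have h_eq (n : ℕ) : ∫ x in E \ K n, h x ∂ν = ∫ x in E, h x ∂ν := by
    rw [setIntegral_sdiff (hK n).measurableSet hh.integrableOn (hKE n), h_compact _ (hKE n) (hK n),
      sub_zero]
  simpa only [h_eq, tendsto_const_nhds_iff] using hh.tendsto_setIntegral_nhds_zero h_small

theorem exists_measureReal_thickening_le [PseudoEMetricSpace X] [OpensMeasurableSpace X]
    (μ : Measure X) [IsFiniteMeasure μ] {K : Set X} (hK : IsClosed K) (hμK : μ K = 0) {r η : ℝ}
    (hr : 0 < r) (hη : 0 < η) : ∃ δ ∈ Set.Ioc 0 r, μ.real (thickening δ K) ≤ η := by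
  have h_tendsto : Tendsto (fun δ ↦ μ.real (thickening δ K)) (𝓝[>] 0) (𝓝 0) := by
    have := tendsto_measure_thickening_of_isClosed (μ := μ) ⟨1, one_pos, measure_ne_top _ _⟩ hK
    rw [hμK] at this
    exact (ENNReal.tendsto_toReal ENNReal.zero_ne_top).comp this
  obtain ⟨δ, hδη, hδ⟩ := ((h_tendsto.eventually_le_const hη).and (Ioc_mem_nhdsGT hr)).exists
  exact ⟨δ, hδ, hδη⟩

end FiniteMeasures

section HalfPlane

theorem one_add_re_le_norm_one_add (g : ℂ) : 1 + g.re ≤ ‖1 + g‖ := by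
  simpa using Complex.re_le_norm (1 + g)

variable {g : ℂ} (hg : 0 ≤ g.re)
include hg

theorem one_add_ne_zero_of_re_nonneg : 1 + g ≠ 0 := fun h ↦ by
  have := congrArg Complex.re h
  simp only [Complex.add_re, Complex.one_re, Complex.zero_re] at this
  linarith

theorem norm_div_one_add_le_norm : ‖g / (1 + g)‖ ≤ ‖g‖ := by
  rw [norm_div]
  exact div_le_self (norm_nonneg g) (by linarith [one_add_re_le_norm_one_add g])

theorem norm_div_one_add_le_one : ‖g / (1 + g)‖ ≤ 1 := by
  rw [norm_div]
  refine div_le_one_of_le₀ ?_ (norm_nonneg _)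
  rw [← sq_le_sq₀ (norm_nonneg _) (norm_nonneg _), Complex.sq_norm, Complex.sq_norm,
    Complex.normSq_add]
  simp only [map_one, one_mul, Complex.conj_re]
  linarith

theorem norm_div_one_add_sub_one_le : ‖g / (1 + g) - 1‖ ≤ 1 / (1 + g.re) := by
  have h_eq : g / (1 + g) - 1 = -(1 / (1 + g)) := by
    have := one_add_ne_zero_of_re_nonneg hg
    field_simp
    ring
  rw [h_eq, norm_neg, norm_div, norm_one]
  exact one_div_le_one_div_of_le (by linarith) (one_add_re_le_norm_one_add g)

end HalfPlane

section CirclePoints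

theorem ofReal_mul_coe_circle_mem_ball {ρ : ℝ} (hρ₀ : 0 ≤ ρ) (hρ₁ : ρ < 1) (z : Circle) :
    (ρ * z : ℂ) ∈ ball (0 : ℂ) 1 := by
  simpa [Circle.norm_coe, abs_of_nonneg hρ₀] using hρ₁

theorem circle_coe_sub_ne_zero {w : ℂ} (hw : w ∈ ball (0 : ℂ) 1) (s : Circle) :
    (s : ℂ) - w ≠ 0 := by
  rintro h
  simp [← sub_eq_zero.1 h, Circle.norm_coe] at hw

theorem half_le_norm_sub_mul_of_le_dist {s z : Circle} {ρ δ : ℝ} (hρ : ρ ≤ 1) (hρδ : 1 - ρ ≤ δ / 2)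
    (hδ : δ ≤ dist s z) : δ / 2 ≤ ‖(s : ℂ) - ρ * z‖ := by
  have h_radial : ‖(ρ * z - z : ℂ)‖ = 1 - ρ := by
    rw [← sub_one_mul, norm_mul, Circle.norm_coe, mul_one, ← Complex.ofReal_one,
      ← Complex.ofReal_sub, Complex.norm_real, Real.norm_of_nonpos (by linarith), neg_sub]
  have h_triangle : dist s z ≤ ‖(s : ℂ) - ρ * z‖ + ‖(ρ * z - z : ℂ)‖ := by
    change dist (s : ℂ) z ≤ _
    rw [dist_eq_norm]
    exact norm_sub_le_norm_sub_add_norm_sub _ _ _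
  linarith

theorem continuous_herglotzRieszKernel_circle {w : ℂ} (hw : w ∈ ball (0 : ℂ) 1) :
    Continuous fun s : Circle ↦ herglotzRieszKernel 0 w s :=
  (continuousOn_herglotzRieszKernel_sphere hw).comp_continuous (by fun_prop) fun s ↦ by
    simp [Circle.norm_coe]

theorem hasDerivAt_herglotzRieszKernel {s w : ℂ} (h : s - w ≠ 0) :
    HasDerivAt (fun w ↦ herglotzRieszKernel 0 w s) (2 * s / (s - w) ^ 2) w := by
  simp only [herglotzRieszKernel_def, sub_zero]
  convert! ((hasDerivAt_id w).const_add s).div ((hasDerivAt_id w).const_sub s) h using 1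
  simp only [id]
  ring

end CirclePoints

section HerglotzTransform

variable [MeasurableSpace Circle]

/-- The Herglotz transform `w ↦ ∫ (s + w) / (s - w) dm(s)` of a measure on the unit circle: on the
unit disc it is holomorphic, with the Poisson integral of `m` as its real part. -/
noncomputable def herglotzTransform (m : Measure Circle) (w : ℂ) : ℂ :=
  ∫ s : Circle, herglotzRieszKernel 0 w s ∂m

theorem norm_herglotzTransform_le (m : Measure Circle) [IsFiniteMeasure m] {w : ℂ}
    (hw : ‖w‖ ≤ 1) {d : ℝ} (hd : 0 < d) (h_dist : ∀ᵐ s : Circle ∂m, d ≤ ‖(s : ℂ) - w‖) :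
    ‖herglotzTransform m w‖ ≤ 2 / d * m.real Set.univ := by
  refine norm_integral_le_of_norm_le_const ?_
  filter_upwards [h_dist] with s hs
  rw [herglotzRieszKernel_def, sub_zero, sub_zero, norm_div]
  gcongr
  exact (norm_add_le _ _).trans (by rw [Circle.norm_coe]; linarith)

variable [BorelSpace Circle] (m : Measure Circle) [IsFiniteMeasure m]

theorem integrable_herglotzRieszKernel {w : ℂ} (hw : w ∈ ball (0 : ℂ) 1) :
    Integrable (fun s : Circle ↦ herglotzRieszKernel 0 w s) m :=
  (continuous_herglotzRieszKernel_circle hw).integrable_of_hasCompactSupport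
    (.of_compactSpace _)

theorem differentiableOn_herglotzTransform :
    DifferentiableOn ℂ (herglotzTransform m) (ball 0 1) := by
  intro w₀ hw₀
  obtain ⟨ρ, hw₀ρ, hρ⟩ := exists_between (mem_ball_zero_iff.1 hw₀)
  have h_unit {w : ℂ} (hw : w ∈ ball (0 : ℂ) ρ) : w ∈ ball (0 : ℂ) 1 := ball_subset_ball hρ.le hw
  have h_nhds : ball (0 : ℂ) ρ ∈ 𝓝 w₀ := isOpen_ball.mem_nhds (mem_ball_zero_iff.2 hw₀ρ)
  have h_bound (s : Circle) (w : ℂ) (hw : w ∈ ball (0 : ℂ) ρ) :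
      ‖2 * (s : ℂ) / (s - w) ^ 2‖ ≤ 2 / (1 - ρ) ^ 2 := by
    have h_dist : 1 - ρ ≤ ‖(s : ℂ) - w‖ := by
      have := norm_sub_norm_le (s : ℂ) w
      rw [Circle.norm_coe] at this
      linarith [mem_ball_zero_iff.1 hw]
    have := sub_pos.2 hρ
    simp only [norm_div, norm_mul, norm_pow, Circle.norm_coe, mul_one, Complex.norm_ofNat]
    gcongr
  have h_deriv := hasDerivAt_integral_of_dominated_loc_of_deriv_le
    (F := fun w (s : Circle) ↦ herglotzRieszKernel 0 w s) (μ := m) h_nhds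
    (by
      filter_upwards [h_nhds] with w hw
      exact (continuous_herglotzRieszKernel_circle (h_unit hw)).aestronglyMeasurable)
    (integrable_herglotzRieszKernel m hw₀)
    (Continuous.aestronglyMeasurable <| by
      have (s : Circle) := circle_coe_sub_ne_zero hw₀ s
      fun_prop (disch := simp [this]))
    (.of_forall h_bound) (integrable_const _)
    (.of_forall fun s w hw ↦ hasDerivAt_herglotzRieszKernel (circle_coe_sub_ne_zero (h_unit hw) s))
  exact h_deriv.2.differentiableAt.differentiableWithinAt

theorem integrable_poissonKernel {w : ℂ} (hw : w ∈ ball (0 : ℂ) 1) :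
    Integrable (fun s : Circle ↦ poissonKernel 0 w s) m := by
  simp only [poissonKernel_eq_re_herglotzRieszKernel]
  exact (integrable_herglotzRieszKernel m hw).re

theorem re_herglotzTransform {w : ℂ} (hw : w ∈ ball (0 : ℂ) 1) :
    (herglotzTransform m w).re = ∫ s : Circle, poissonKernel 0 w s ∂m := by
  simp only [poissonKernel_eq_re_herglotzRieszKernel]
  exact (integral_re (integrable_herglotzRieszKernel m hw)).symm

theorem re_herglotzTransform_nonneg {w : ℂ} (hw : w ∈ ball (0 : ℂ) 1) :
    0 ≤ (herglotzTransform m w).re := by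
  rw [re_herglotzTransform m hw]
  refine integral_nonneg fun s ↦ ?_
  have : ‖w‖ ^ 2 ≤ 1 := pow_le_one₀ (norm_nonneg w) (mem_ball_zero_iff.1 hw).le
  simp only [poissonKernel_def, sub_zero, Circle.norm_coe, one_pow, Pi.zero_apply]
  exact div_nonneg (sub_nonneg.2 this) (by positivity)

end HerglotzTransform

section Moments

variable [MeasurableSpace Circle] [BorelSpace Circle]

theorem integral_mul_eq_mul_integral_of_integral_pow_mul_eq_zero {ν : Measure Circle}
    {h : Circle → ℂ} (hh : Integrable h ν)
    (h_moments : ∀ n : ℕ, n ≠ 0 → ∫ z : Circle, (z : ℂ) ^ n * h z ∂ν = 0)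
    {f : ℂ → ℂ} {R : ℝ} (hR : 1 < R) (hf : DifferentiableOn ℂ f (ball 0 R)) :
    ∫ z : Circle, f z * h z ∂ν = f 0 * ∫ z, h z ∂ν := by
  set a : ℕ → ℂ := fun n ↦ (n.factorial : ℂ)⁻¹ * iteratedDeriv n f 0 with ha
  have h_taylor (z : ℂ) (hz : ‖z‖ ≤ 1) : HasSum (fun n ↦ a n * z ^ n) (f z) := by
    refine (Complex.hasSum_taylorSeries_on_ball hf
      (mem_ball_zero_iff.2 (hz.trans_lt hR))).congr_fun fun n ↦ ?_
    simp only [ha, sub_zero, smul_eq_mul]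
    ring
  have ha_summable : Summable fun n ↦ ‖a n‖ := by
    simpa only [one_pow, mul_one] using (h_taylor 1 norm_one.le).summable.norm
  have h_term_integrable (n : ℕ) : Integrable (fun z : Circle ↦ a n * ((z : ℂ) ^ n * h z)) ν :=
    (hh.bdd_mul (c := 1) (by fun_prop) (by simp [Circle.norm_coe])).const_mul _
  have h_sum : HasSum (fun n ↦ ∫ z : Circle, a n * ((z : ℂ) ^ n * h z) ∂ν)
      (∫ z : Circle, ∑' n, a n * ((z : ℂ) ^ n * h z) ∂ν) := by
    refine hasSum_integral_of_summable_integral_norm h_term_integrable ?_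
    simp only [norm_mul, norm_pow, Circle.norm_coe, one_pow, one_mul, integral_const_mul]
    exact ha_summable.mul_right _
  have h_tsum (z : Circle) : ∑' n, a n * ((z : ℂ) ^ n * h z) = f z * h z := by
    simp only [← mul_assoc]
    exact ((h_taylor z (Circle.norm_coe z).le).mul_right _).tsum_eq
  simp only [h_tsum, integral_const_mul] at h_sum
  have h_single := hasSum_single (f := fun n ↦ a n * ∫ z : Circle, (z : ℂ) ^ n * h z ∂ν) 0
    fun n hn ↦ by rw [h_moments n hn, mul_zero]
  simpa [ha] using h_sum.unique h_single

variable (lam : Measure Circle) [lam.IsHaarMeasure]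

theorem integral_circle_pow_eq_zero {n : ℕ} (hn : n ≠ 0) :
    ∫ z : Circle, (z : ℂ) ^ n ∂lam = 0 := by
  refine integral_eq_zero_of_mul_left_eq_neg (g := Circle.exp (Real.pi / n)) fun z ↦ ?_
  have h_root : (Circle.exp (Real.pi / n) : ℂ) ^ n = -1 := by
    rw [Circle.coe_exp, ← Complex.exp_nat_mul, ← Complex.exp_pi_mul_I]
    congr 1
    push_cast
    field_simp
  rw [Circle.coe_mul, mul_pow, h_root, neg_one_mul]

theorem integral_circle_eq_apply_zero [IsProbabilityMeasure lam] {f : ℂ → ℂ} {R : ℝ}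
    (hR : 1 < R) (hf : DifferentiableOn ℂ f (ball 0 R)) : ∫ z : Circle, f z ∂lam = f 0 := by
  have h_mean := integral_mul_eq_mul_integral_of_integral_pow_mul_eq_zero (integrable_const (1 : ℂ))
    (fun n hn ↦ by simpa only [mul_one] using integral_circle_pow_eq_zero lam hn) hR hf
  simpa only [mul_one, integral_const, probReal_univ, one_smul] using h_mean

end Moments

section PeakFunctions

variable [MeasurableSpace Circle] [BorelSpace Circle] (lam : Measure Circle) [lam.IsHaarMeasure]
  [IsProbabilityMeasure lam]

theorem herglotzTransform_haar {w : ℂ} (hw : w ∈ ball (0 : ℂ) 1) : herglotzTransform lam w = 1 := by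
  set F : ℂ → ℂ := fun u ↦ (1 + w * u) / (1 - w * u) with hF
  have hw' : ‖w‖ < 1 := mem_ball_zero_iff.1 hw
  have h_kernel (s : Circle) : herglotzRieszKernel 0 w s = F ↑s⁻¹ := by
    have := circle_coe_sub_ne_zero hw s
    have := s.coe_ne_zero
    rw [herglotzRieszKernel_def, sub_zero, sub_zero, hF, Circle.coe_inv]
    field_simp
  have hR : 1 < 2 / (1 + ‖w‖) := by
    rw [one_lt_div (by positivity)]
    linarith
  have hF_diff : DifferentiableOn ℂ F (ball 0 (2 / (1 + ‖w‖))) := by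
    refine DifferentiableOn.div (by fun_prop) (by fun_prop) fun u hu h_zero ↦ ?_
    have h_one : ‖w‖ * ‖u‖ = 1 := by rw [← norm_mul, ← sub_eq_zero.1 h_zero, norm_one]
    have h_lt : ‖u‖ * (1 + ‖w‖) < 2 := (lt_div_iff₀ (by positivity)).1 (mem_ball_zero_iff.1 hu)
    nlinarith [norm_nonneg w, norm_nonneg u]
  simp only [herglotzTransform, h_kernel]
  rw [integral_inv_eq_self (fun s : Circle ↦ F s) lam, integral_circle_eq_apply_zero lam hR hF_diff]
  simp [hF]

theorem one_sub_le_re_herglotzTransform_restrict {U : Set Circle} (hU : MeasurableSet U)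
    {z : Circle} {δ : ℝ} (hδ : 0 < δ) (hzU : ball z δ ⊆ U) {ρ : ℝ} (hρ₀ : 0 ≤ ρ) (hρ₁ : ρ < 1)
    (hρδ : 1 - ρ ≤ δ / 2) :
    1 - 8 * (1 - ρ) / δ ^ 2 ≤ (herglotzTransform (lam.restrict U) (ρ * z)).re := by
  have hw := ofReal_mul_coe_circle_mem_ball hρ₀ hρ₁ z
  have h_total : ∫ s : Circle, poissonKernel 0 (ρ * z) s ∂lam = 1 := by
    rw [← re_herglotzTransform lam hw, herglotzTransform_haar lam hw, Complex.one_re]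
  have h_far : ∫ s : Circle in Uᶜ, poissonKernel 0 (ρ * z) s ∂lam ≤ 8 * (1 - ρ) / δ ^ 2 := by
    have h_pointwise (s : Circle) (hs : s ∈ Uᶜ) :
        poissonKernel 0 (ρ * z) s ≤ 8 * (1 - ρ) / δ ^ 2 := by
      have h_dist : δ / 2 ≤ ‖(s : ℂ) - ρ * z‖ :=
        half_le_norm_sub_mul_of_le_dist hρ₁.le hρδ (not_lt.1 fun h ↦ hs (hzU h))
      calc poissonKernel 0 (ρ * z) s = (1 - ρ ^ 2) / ‖(s : ℂ) - ρ * z‖ ^ 2 := by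
            simp [poissonKernel_def, Circle.norm_coe]
        _ ≤ 2 * (1 - ρ) / (δ / 2) ^ 2 := by
            gcongr
            nlinarith
        _ = 8 * (1 - ρ) / δ ^ 2 := by
            field_simp
            ring
    calc ∫ s : Circle in Uᶜ, poissonKernel 0 (ρ * z) s ∂lam
        ≤ ∫ s : Circle in Uᶜ, 8 * (1 - ρ) / δ ^ 2 ∂lam :=
          setIntegral_mono_on (integrable_poissonKernel lam hw).integrableOn
            (integrable_const _).integrableOn hU.compl h_pointwise
      _ ≤ 8 * (1 - ρ) / δ ^ 2 := by
          have := sub_pos.2 hρ₁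
          rw [setIntegral_const, smul_eq_mul]
          exact mul_le_of_le_one_left (by positivity) measureReal_le_one
  rw [re_herglotzTransform _ hw]
  linarith [integral_add_compl hU (integrable_poissonKernel lam hw)]

theorem exists_differentiableOn_re_nonneg_concentrated {K : Set Circle} (hK : IsClosed K)
    (hK₀ : lam K = 0) {r η : ℝ} (hr : 0 < r) (hη : 0 < η) :
    ∃ G : ℂ → ℂ, ∃ R > 1, DifferentiableOn ℂ G (ball 0 R) ∧ (∀ u ∈ ball 0 R, 0 ≤ (G u).re) ∧
      (∀ z ∈ K, 1 / 2 ≤ (G z).re) ∧ ∀ z : Circle, z ∉ thickening r K → ‖G z‖ ≤ η := by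
  obtain ⟨δ, ⟨hδ, hδ_le⟩, hδ_measure⟩ := exists_measureReal_thickening_le lam hK hK₀
    (r := min 1 (r / 2)) (η := η * r / 8) (by positivity) (by positivity)
  obtain ⟨hδ_one, hδr⟩ := le_min_iff.1 hδ_le
  set U := thickening δ K
  have hU : MeasurableSet U := isOpen_thickening.measurableSet
  -- The radius is chosen so that the loss `8 * (1 - ρ) / δ ^ 2` on `K` is exactly `1 / 2`.
  obtain ⟨ρ, hρ⟩ : ∃ ρ, ρ = 1 - δ ^ 2 / 16 := ⟨_, rfl⟩
  have hρ₀ : 0 < ρ := by nlinarith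
  have hρ₁ : ρ < 1 := by nlinarith
  have hρδ : 1 - ρ ≤ δ / 2 := by nlinarith
  have h_ball (u : ℂ) (hu : u ∈ ball (0 : ℂ) (1 / ρ)) : (ρ * u : ℂ) ∈ ball (0 : ℂ) 1 := by
    rw [mem_ball_zero_iff, lt_div_iff₀ hρ₀] at hu
    rwa [mem_ball_zero_iff, norm_mul, Complex.norm_of_nonneg hρ₀.le, mul_comm]
  refine ⟨fun u ↦ herglotzTransform (lam.restrict U) (ρ * u), 1 / ρ, (one_lt_div hρ₀).2 hρ₁,
    (differentiableOn_herglotzTransform _).comp (by fun_prop) h_ball,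
    fun u hu ↦ re_herglotzTransform_nonneg _ (h_ball u hu), fun z hz ↦ ?_, fun z hz ↦ ?_⟩
  · have h_loss : 8 * (1 - ρ) / δ ^ 2 = 1 / 2 := by
      rw [hρ]
      field_simp
      ring
    linarith [one_sub_le_re_herglotzTransform_restrict lam hU hδ (ball_subset_thickening hz δ)
      hρ₀.le hρ₁ hρδ]
  · have h_far : ∀ᵐ s : Circle ∂lam.restrict U, r / 2 / 2 ≤ ‖(s : ℂ) - ρ * z‖ := by
      filter_upwards [ae_restrict_mem hU] with s hs
      obtain ⟨k, hk, hsk⟩ := mem_thickening_iff.1 hs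
      have hzk : r ≤ dist z k := not_lt.1 fun h ↦ hz (mem_thickening_iff.2 ⟨k, hk, h⟩)
      refine half_le_norm_sub_mul_of_le_dist hρ₁.le (by linarith) ?_
      linarith [dist_triangle z s k, dist_comm z s]
    calc ‖herglotzTransform (lam.restrict U) (ρ * z)‖
        ≤ 2 / (r / 2 / 2) * (lam.restrict U).real Set.univ := norm_herglotzTransform_le _
          (mem_ball_zero_iff.1 (ofReal_mul_coe_circle_mem_ball hρ₀.le hρ₁ z)).le (by positivity)
          h_far
      _ ≤ 2 / (r / 2 / 2) * (η * r / 8) := by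
          rw [measureReal_restrict_apply_univ]
          gcongr
      _ = η := by field_simp; ring

theorem exists_differentiableOn_peak {K : Set Circle} (hK : IsClosed K) (hK₀ : lam K = 0) {ε : ℝ}
    (hε : 0 < ε) :
    ∃ f : ℂ → ℂ, ∃ R > 1, DifferentiableOn ℂ f (ball 0 R) ∧ (∀ z : Circle, ‖f z‖ ≤ 1) ∧
      (∀ z ∈ K, ‖f z - 1‖ ≤ ε) ∧ ∀ z : Circle, z ∉ thickening ε K → ‖f z‖ ≤ ε := by
  obtain ⟨G, R, hR, hG_diff, hG_re, hG_K, hG_far⟩ := exists_differentiableOn_re_nonneg_concentrated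
    lam hK hK₀ hε (η := ε ^ 2 / 2) (by positivity)
  set g : ℂ → ℂ := fun u ↦ (2 / ε : ℝ) * G u with hg
  have hg_re (u : ℂ) : (g u).re = 2 / ε * (G u).re := Complex.re_ofReal_mul _ _
  have hg_nonneg (u : ℂ) (hu : u ∈ ball 0 R) : 0 ≤ (g u).re :=
    hg_re u ▸ mul_nonneg (by positivity) (hG_re u hu)
  have hg_circle (z : Circle) : 0 ≤ (g z).re :=
    hg_nonneg z (by simpa [Circle.norm_coe] using hR)
  have hg_diff : DifferentiableOn ℂ g (ball 0 R) := hG_diff.const_mul _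
  refine ⟨fun u ↦ g u / (1 + g u), R, hR,
    hg_diff.div (hg_diff.const_add 1) fun u hu ↦ one_add_ne_zero_of_re_nonneg (hg_nonneg u hu),
    fun z ↦ norm_div_one_add_le_one (hg_circle z), fun z hz ↦ ?_, fun z hz ↦ ?_⟩
  · have h_large : 1 / ε ≤ (g z).re :=
      calc 1 / ε = 2 / ε * (1 / 2) := by ring
        _ ≤ 2 / ε * (G z).re := by gcongr; exact hG_K z hz
        _ = (g z).re := (hg_re z).symm
    calc ‖g z / (1 + g z) - 1‖ ≤ 1 / (1 + (g z).re) := norm_div_one_add_sub_one_le (hg_circle z)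
      _ ≤ 1 / (1 / ε) := by gcongr; linarith
      _ = ε := one_div_one_div ε
  · calc ‖g z / (1 + g z)‖ ≤ ‖g z‖ := norm_div_one_add_le_norm (hg_circle z)
      _ = 2 / ε * ‖G z‖ := by rw [hg, norm_mul, Complex.norm_of_nonneg (by positivity)]
      _ ≤ 2 / ε * (ε ^ 2 / 2) := by gcongr; exact hG_far z hz
      _ = ε := by field_simp

variable {ν : Measure Circle} {h : Circle → ℂ}

theorem setIntegral_eq_zero_of_isClosed_of_integral_pow_mul_eq_zero (hh : Integrable h ν)
    (h_moments : ∀ n : ℕ, ∫ z : Circle, (z : ℂ) ^ n * h z ∂ν = 0) {K : Set Circle}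
    (hK : IsClosed K) (hK₀ : lam K = 0) : ∫ z in K, h z ∂ν = 0 := by
  choose f R hR hf_diff hf_le hf_one hf_zero using fun n : ℕ ↦
    exists_differentiableOn_peak lam hK hK₀ (ε := 1 / ((n : ℝ) + 1)) (by positivity)
  have h_annihilate (n : ℕ) : ∫ z : Circle, f n z * h z ∂ν = 0 := by
    rw [integral_mul_eq_mul_integral_of_integral_pow_mul_eq_zero hh (fun m _ ↦ h_moments m) (hR n)
      (hf_diff n)]
    simpa using Or.inr (h_moments 0)
  have h_lim (z : Circle) : Tendsto (fun n ↦ f n z * h z) atTop (𝓝 (K.indicator h z)) := by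
    by_cases hz : z ∈ K
    · rw [Set.indicator_of_mem hz]
      have : Tendsto (fun n ↦ f n z) atTop (𝓝 1) := tendsto_iff_norm_sub_tendsto_zero.2 <|
        squeeze_zero (fun n ↦ norm_nonneg _) (fun n ↦ hf_one n z hz)
          tendsto_one_div_add_atTop_nhds_zero_nat
      simpa only [one_mul] using this.mul_const (h z)
    · rw [Set.indicator_of_notMem hz]
      have h_off : ∀ᶠ n : ℕ in atTop, z ∉ thickening (1 / ((n : ℝ) + 1)) K :=
        tendsto_one_div_add_atTop_nhds_zero_nat.eventually <|
          eventually_notMem_thickening_of_infEDist_pos (hK.closure_eq.symm ▸ hz)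
      have : Tendsto (fun n ↦ f n z) atTop (𝓝 0) :=
        squeeze_zero_norm' (h_off.mono fun n ↦ hf_zero n z)
          tendsto_one_div_add_atTop_nhds_zero_nat
      simpa only [zero_mul] using this.mul_const (h z)
  have h_cont (n : ℕ) : Continuous fun z : Circle ↦ f n z :=
    (hf_diff n).continuousOn.comp_continuous (by fun_prop) fun z ↦ by
      simpa [Circle.norm_coe] using hR n
  have h_tendsto := tendsto_integral_of_dominated_convergence
    (F := fun n (z : Circle) ↦ f n z * h z) (fun z ↦ ‖h z‖)
    (fun n ↦ (h_cont n).aestronglyMeasurable.mul hh.aestronglyMeasurable) hh.norm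
    (fun n ↦ .of_forall fun z ↦ by
      simpa only [norm_mul] using mul_le_of_le_one_left (norm_nonneg (h z)) (hf_le n z))
    (.of_forall h_lim)
  rw [integral_indicator hK.measurableSet] at h_tendsto
  simpa only [h_annihilate, tendsto_const_nhds_iff, eq_comm] using h_tendsto

theorem setIntegral_eq_zero_of_integral_pow_mul_eq_zero [IsFiniteMeasure ν] (hh : Integrable h ν)
    (h_moments : ∀ n : ℕ, ∫ z : Circle, (z : ℂ) ^ n * h z ∂ν = 0) {E : Set Circle}
    (hE : MeasurableSet E) (hE₀ : lam E = 0) : ∫ z in E, h z ∂ν = 0 :=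
  setIntegral_eq_zero_of_forall_isCompact_subset hh hE (measure_ne_top ν E) fun _ hKE hK ↦
    setIntegral_eq_zero_of_isClosed_of_integral_pow_mul_eq_zero lam hh h_moments hK.isClosed
      (measure_mono_null hKE hE₀)

end PeakFunctions

/-- **F. and M. Riesz theorem** (Theorem 3.1 of the paper).  A complex regular Borel
measure `μ` on the unit circle, given via its Jordan decomposition
`μ = (μ₁ - μ₂) + i (μ₃ - μ₄)` into finite positive regular Borel measures, that
annihilates all the monomials `ζ ↦ ζ ^ n`, `n ≥ 0` (hence the disc algebra) is
absolutely continuous with respect to the normalized Haar (arc-length) measure `lam`. -/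
theorem stmt_0 [MeasurableSpace Circle] [BorelSpace Circle]
    (lam : Measure Circle) [lam.IsHaarMeasure] [IsProbabilityMeasure lam]
    (μ₁ μ₂ μ₃ μ₄ : Measure Circle)
    [IsFiniteMeasure μ₁] [IsFiniteMeasure μ₂] [IsFiniteMeasure μ₃] [IsFiniteMeasure μ₄]
    [μ₁.Regular] [μ₂.Regular] [μ₃.Regular] [μ₄.Regular]
    (hann : ∀ n : ℕ,
      (∫ z : Circle, (z : ℂ) ^ n ∂μ₁) - (∫ z : Circle, (z : ℂ) ^ n ∂μ₂)
        + Complex.I * ((∫ z : Circle, (z : ℂ) ^ n ∂μ₃) - (∫ z : Circle, (z : ℂ) ^ n ∂μ₄)) = 0) :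
    ∀ E : Set Circle, MeasurableSet E → lam E = 0 →
      (((μ₁ E).toReal : ℂ) - ((μ₂ E).toReal : ℂ))
        + Complex.I * (((μ₃ E).toReal : ℂ) - ((μ₄ E).toReal : ℂ)) = 0 := by
  intro E hE hE₀
  set μ : Fin 4 → Measure Circle := ![μ₁, μ₂, μ₃, μ₄] with hμ
  have (i : Fin 4) : IsFiniteMeasure (μ i) := by fin_cases i <;> assumption
  obtain ⟨ν, h, _, hh, h_density⟩ :=
    exists_sum_mul_integral_eq_integral_mul μ ![1, -1, Complex.I, -Complex.I]
  have h_moments (n : ℕ) : ∫ z : Circle, (z : ℂ) ^ n * h z ∂ν = 0 := by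
    rw [← h_density _ fun i ↦ Continuous.integrable_of_hasCompactSupport (by fun_prop)
      (.of_compactSpace _), ← hann n, Fin.sum_univ_four]
    simp only [hμ, Matrix.cons_val_zero, Matrix.cons_val_one, Matrix.cons_val, one_mul, neg_mul]
    ring
  have h_indicator (z : Circle) : E.indicator (1 : Circle → ℂ) z * h z = E.indicator h z := by
    by_cases hz : z ∈ E <;> simp [hz]
  have h_E := h_density (E.indicator 1) fun i ↦ (integrable_const (1 : ℂ)).indicator hE
  simp only [h_indicator, integral_indicator hE,
    setIntegral_eq_zero_of_integral_pow_mul_eq_zero lam hh h_moments hE hE₀] at h_E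
  rw [← h_E, Fin.sum_univ_four]
  simp only [hμ, Matrix.cons_val_zero, Matrix.cons_val_one, Matrix.cons_val, Pi.one_apply,
    setIntegral_const, measureReal_def, Complex.real_smul, mul_one]
  ring
end

section
/- Let τ : C(𝕋) → ℂ be a bounded linear functional such that τ(ζ ↦ ζ^n) = 0 for every integer n ≥ 0. Then there exists g ∈ L¹(𝕋, λ) with ‖g‖_1 = ‖τ‖, with ∫_𝕋 ζ^n g(ζ) dλ(ζ) = 0 for every integer n ≥ 0, and such that τ(f) = ∫_𝕋 f g dλ for every f ∈ C(𝕋). -/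
open MeasureTheory

/-!
Write `τ = u μ` with `μ = |τ|` a finite measure and `|u| = 1`; it remains to show `μ ≪ λ`, which is
the F. and M. Riesz theorem. Let `F n` be the component of `z ^ n` orthogonal to all `z ^ m`,
`m > n`, in `L²(μ)`. Since `F n ⟂ z ^ j * F n` for `j > 0`, the measure `|F n|² μ` has no Fourier
coefficients except the zeroth, so it is a multiple of `λ`; hence `F n` vanishes `μ`-almost
everywhere on every `λ`-null set. The annihilation hypothesis says that `conj u` is orthogonal to
`H²(μ)`, the closed span of the `z ^ n` with `n ≥ 0`, and the `F n` with `n < 0` span a dense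
subspace of its orthogonal complement. So `u` vanishes on `λ`-null sets as well, and as `|u| = 1`
this means `μ ≪ λ`.
-/

open Filter
open scoped NNReal ENNReal Topology ComplexConjugate

section RieszDecomposition

variable {X E : Type*} [TopologicalSpace X] [NormedAddCommGroup E] [NormedSpace ℝ E]

theorem nnnorm_div_smul_le {p h : ℝ≥0} {v : E} (hv : ‖v‖₊ ≤ h) : ‖(p / h) • v‖₊ ≤ p := by
  rw [NNReal.smul_def, nnnorm_smul, NNReal.nnnorm_eq]
  calc p / h * ‖v‖₊ ≤ p / h * h := by gcongr
    _ ≤ p := mul_le_of_le_div₀ zero_le zero_le le_rfl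

theorem continuous_div_smul_of_nnnorm_le {p h : X → ℝ≥0} {u : X → E} (hp : Continuous p)
    (hh : Continuous h) (hu : Continuous u) (hph : p ≤ h) (huh : ∀ x, ‖u x‖₊ ≤ h x) :
    Continuous fun x ↦ (p x / h x) • u x := by
  refine continuous_iff_continuousAt.2 fun x ↦ ?_
  by_cases hx : h x = 0
  · have hpx : p x = 0 := le_antisymm (hx ▸ hph x) zero_le
    have hlim : Tendsto (fun y ↦ (p y : ℝ)) (𝓝 x) (𝓝 0) :=
      NNReal.tendsto_coe.2 (hpx ▸ hp.tendsto x)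
    rw [ContinuousAt, hx, div_zero, zero_smul]
    exact squeeze_zero_norm (fun y ↦ mod_cast nnnorm_div_smul_le (huh y)) hlim
  · exact (hp.continuousAt.div hh.continuousAt hx).smul hu.continuousAt

theorem exists_add_eq_of_nnnorm_le_add {u : C(X, E)} {f g : C(X, ℝ≥0)}
    (hu : ∀ x, ‖u x‖₊ ≤ f x + g x) :
    ∃ v w : C(X, E), v + w = u ∧ (∀ x, ‖v x‖₊ ≤ f x) ∧ ∀ x, ‖w x‖₊ ≤ g x := by
  refine ⟨⟨fun x ↦ (f x / (f x + g x)) • u x, ?_⟩, ⟨fun x ↦ (g x / (f x + g x)) • u x, ?_⟩,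
    ContinuousMap.ext fun x ↦ ?_, fun x ↦ nnnorm_div_smul_le (hu x),
    fun x ↦ nnnorm_div_smul_le (hu x)⟩
  · exact continuous_div_smul_of_nnnorm_le (by fun_prop) (by fun_prop) u.continuous
      (fun _ ↦ le_self_add) hu
  · exact continuous_div_smul_of_nnnorm_le (by fun_prop) (by fun_prop) u.continuous
      (fun _ ↦ le_add_self) hu
  · change (f x / (f x + g x)) • u x + (g x / (f x + g x)) • u x = u x
    rw [← add_smul, ← add_div]
    by_cases hx : f x + g x = 0
    · have hux : u x = 0 := nnnorm_eq_zero.1 (le_antisymm (hx ▸ hu x) zero_le)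
      rw [hux, smul_zero]
    · rw [div_self hx, one_smul]

end RieszDecomposition

section Variation

variable {X 𝕜 : Type*} [TopologicalSpace X] [RCLike 𝕜]

/-- The total variation `|τ|` of a continuous functional `τ` on `C(X, 𝕜)`, evaluated at a
nonnegative continuous function `f`: the supremum of `|τ u|` over `|u| ≤ f`. It is the positive
functional to which the Riesz–Markov–Kakutani theorem is applied. The supremum is a junk value
unless it is finite, which is automatic on compact `X`. -/
noncomputable def variation (τ : C(X, 𝕜) →L[𝕜] 𝕜) (f : C(X, ℝ≥0)) : ℝ≥0 :=
  ⨆ u : {u : C(X, 𝕜) // ∀ x, ‖u x‖₊ ≤ f x}, ‖τ u‖₊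

variable {τ : C(X, 𝕜) →L[𝕜] 𝕜} {f g : C(X, ℝ≥0)} {c : ℝ≥0}

theorem variation_le (h : ∀ u : C(X, 𝕜), (∀ x, ‖u x‖₊ ≤ f x) → ‖τ u‖₊ ≤ c) :
    variation τ f ≤ c :=
  ciSup_le' fun u ↦ h u u.2

variable [CompactSpace X]

theorem nnnorm_apply_le_mul {u : C(X, 𝕜)} (hu : ∀ x, ‖u x‖₊ ≤ c) : ‖τ u‖₊ ≤ ‖τ‖₊ * c :=
  (τ.le_opNNNorm u).trans
    (mul_le_mul_of_nonneg_left ((ContinuousMap.norm_le u c.coe_nonneg).2 hu) zero_le)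

theorem nnnorm_apply_le_variation {u : C(X, 𝕜)} (hu : ∀ x, ‖u x‖₊ ≤ f x) :
    ‖τ u‖₊ ≤ variation τ f := by
  obtain ⟨c, hc⟩ := (isCompact_range f.continuous).bddAbove
  refine le_ciSup (f := fun v : {v : C(X, 𝕜) // ∀ x, ‖v x‖₊ ≤ f x} ↦ ‖τ v‖₊)
    ⟨‖τ‖₊ * c, ?_⟩ ⟨u, hu⟩
  rintro _ ⟨v, rfl⟩
  exact nnnorm_apply_le_mul fun x ↦ (v.2 x).trans (hc ⟨x, rfl⟩)

theorem variation_smul_le (τ : C(X, 𝕜) →L[𝕜] 𝕜) (f : C(X, ℝ≥0)) (hc : c ≠ 0) :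
    variation τ (c • f) ≤ c * variation τ f := by
  refine variation_le fun u hu ↦ ?_
  have hscaled : ∀ x, ‖(c⁻¹ • u) x‖₊ ≤ f x := fun x ↦ by
    rw [ContinuousMap.smul_apply, NNReal.smul_def, nnnorm_smul, NNReal.nnnorm_eq]
    exact (inv_mul_le_iff₀ (pos_iff_ne_zero.2 hc)).2 (hu x)
  calc ‖τ u‖₊ = ‖τ (c • c⁻¹ • u)‖₊ := by rw [smul_inv_smul₀ hc]
    _ = c * ‖τ (c⁻¹ • u)‖₊ := by
      rw [τ.map_smul_of_tower, NNReal.smul_def, nnnorm_smul, NNReal.nnnorm_eq]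
    _ ≤ c * variation τ f := by gcongr; exact nnnorm_apply_le_variation hscaled

theorem variation_smul (τ : C(X, 𝕜) →L[𝕜] 𝕜) (c : ℝ≥0) (f : C(X, ℝ≥0)) :
    variation τ (c • f) = c * variation τ f := by
  rcases eq_or_ne c 0 with rfl | hc
  · rw [zero_smul, zero_mul, ← nonpos_iff_eq_zero, ← mul_zero ‖τ‖₊]
    exact variation_le fun u hu ↦ nnnorm_apply_le_mul hu
  · refine (variation_smul_le τ f hc).antisymm ?_
    calc c * variation τ f = c * variation τ (c⁻¹ • c • f) := by rw [inv_smul_smul₀ hc]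
      _ ≤ c * (c⁻¹ * variation τ (c • f)) := by
        gcongr; exact variation_smul_le τ _ (inv_ne_zero hc)
      _ = variation τ (c • f) := mul_inv_cancel_left₀ hc _

/-- Two functions can be rotated so that `τ` takes nonnegative values on both; then
`‖τ u‖ + ‖τ v‖` is the value of `τ` at a single function of modulus at most `f + g`. -/
theorem nnnorm_add_nnnorm_le_variation_add {u v : C(X, 𝕜)} (hu : ∀ x, ‖u x‖₊ ≤ f x)
    (hv : ∀ x, ‖v x‖₊ ≤ g x) : ‖τ u‖₊ + ‖τ v‖₊ ≤ variation τ (f + g) := by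
  obtain ⟨a, ha, hau⟩ := RCLike.exists_norm_eq_mul_self (τ u)
  obtain ⟨b, hb, hbv⟩ := RCLike.exists_norm_eq_mul_self (τ v)
  have hrotated : ∀ x, ‖(a • u + b • v) x‖₊ ≤ (f + g) x := fun x ↦
    (nnnorm_add_le _ _).trans (add_le_add
      (by simpa [nnnorm_mul, ← NNReal.coe_le_coe, ha] using hu x)
      (by simpa [nnnorm_mul, ← NNReal.coe_le_coe, hb] using hv x))
  have hτ : τ (a • u + b • v) = ((‖τ u‖ + ‖τ v‖ : ℝ) : 𝕜) := by
    simp [hau, hbv]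
  calc ‖τ u‖₊ + ‖τ v‖₊ = ‖τ (a • u + b • v)‖₊ := by
        ext; rw [hτ, coe_nnnorm, RCLike.norm_of_nonneg (by positivity)]; rfl
    _ ≤ variation τ (f + g) := nnnorm_apply_le_variation hrotated

theorem variation_add (τ : C(X, 𝕜) →L[𝕜] 𝕜) (f g : C(X, ℝ≥0)) :
    variation τ (f + g) = variation τ f + variation τ g := by
  apply le_antisymm
  · refine variation_le fun u hu ↦ ?_
    obtain ⟨v, w, rfl, hv, hw⟩ := exists_add_eq_of_nnnorm_le_add hu
    rw [map_add]
    exact (nnnorm_add_le _ _).trans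
      (add_le_add (nnnorm_apply_le_variation hv) (nnnorm_apply_le_variation hw))
  · have (h : C(X, ℝ≥0)) : Nonempty {u : C(X, 𝕜) // ∀ x, ‖u x‖₊ ≤ h x} := ⟨0, by simp⟩
    rw [← NNReal.coe_le_coe, NNReal.coe_add, variation, variation, NNReal.coe_iSup,
      NNReal.coe_iSup]
    exact ciSup_add_ciSup_le fun u v ↦ mod_cast nnnorm_add_nnnorm_le_variation_add u.2 v.2

variable [T2Space X] [MeasurableSpace X] [BorelSpace X]

theorem exists_regular_norm_apply_le_integral_norm (τ : C(X, 𝕜) →L[𝕜] 𝕜) :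
    ∃ μ : Measure X, μ.Regular ∧ μ.real Set.univ ≤ ‖τ‖ ∧
      ∀ f : C(X, 𝕜), ‖τ f‖ ≤ ∫ x, ‖f x‖ ∂μ := by
  let Λ : CompactlySupportedContinuousMap X ℝ≥0 →ₗ[ℝ≥0] ℝ≥0 :=
    { toFun f := variation τ f
      map_add' f g := variation_add τ f.toContinuousMap g.toContinuousMap
      map_smul' c f := variation_smul τ c f.toContinuousMap }
  have integral_eq (f : C(X, ℝ≥0)) : ∫ x, (f x : ℝ) ∂NNRealRMK.rieszMeasure Λ = variation τ f :=
    NNRealRMK.integral_rieszMeasure Λ ⟨f, .of_compactSpace _⟩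
  refine ⟨NNRealRMK.rieszMeasure Λ, inferInstance, ?_, fun f ↦ ?_⟩
  · calc (NNRealRMK.rieszMeasure Λ).real Set.univ = variation τ (1 : C(X, ℝ≥0)) := by
          simp [← integral_eq]
      _ ≤ ‖τ‖ := mod_cast variation_le fun u hu ↦ (nnnorm_apply_le_mul hu).trans (mul_one _).le
  · let absf : C(X, ℝ≥0) := ⟨fun x ↦ ‖f x‖₊, by fun_prop⟩
    calc ‖τ f‖ ≤ variation τ absf := nnnorm_apply_le_variation fun x ↦ le_rfl
      _ = ∫ x, ‖f x‖ ∂NNRealRMK.rieszMeasure Λ := (integral_eq absf).symm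

end Variation

section PolarForm

theorem exists_norm_le_and_apply_eq_inner {𝕜 E H : Type*} [RCLike 𝕜] [NormedAddCommGroup E]
    [NormedSpace 𝕜 E] [NormedAddCommGroup H] [InnerProductSpace 𝕜 H] [CompleteSpace H]
    {L : E →ₗ[𝕜] H} (hL : DenseRange L) {τ : E →ₗ[𝕜] 𝕜} {C : ℝ} (hC : 0 ≤ C)
    (hτ : ∀ x, ‖τ x‖ ≤ C * ‖L x‖) : ∃ k : H, ‖k‖ ≤ C ∧ ∀ x, τ x = inner 𝕜 k (L x) := by
  refine ⟨(InnerProductSpace.toDual 𝕜 H).symm (τ.extendOfNorm L), ?_, fun x ↦ ?_⟩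
  · rw [LinearIsometryEquiv.norm_map]
    exact LinearMap.opNorm_extendOfNorm_le hL hC hτ
  · rw [InnerProductSpace.toDual_symm_apply, LinearMap.extendOfNorm_eq hL ⟨C, hτ⟩]

variable {α E : Type*} [MeasurableSpace α] {μ : Measure α} [NormedAddCommGroup E]

theorem integral_norm_sq_eq_norm_sq (f : Lp E 2 μ) : ∫ x, ‖f x‖ ^ 2 ∂μ = ‖f‖ ^ 2 := by
  have h := (Lp.memLp f).eLpNorm_eq_integral_rpow_norm two_ne_zero ENNReal.ofNat_ne_top
  rw [Lp.norm_def, h, ENNReal.toReal_ofReal (by positivity), ← Real.rpow_natCast,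
    ← Real.rpow_mul (by positivity)]
  simp

theorem integral_norm_le_sqrt_mul_norm [IsFiniteMeasure μ] (f : Lp E 2 μ) :
    ∫ x, ‖f x‖ ∂μ ≤ √(μ.real Set.univ) * ‖f‖ := by
  have hf := Lp.aestronglyMeasurable f
  have hle : eLpNorm f 1 μ ≤ eLpNorm f 2 μ * μ Set.univ ^ (1 / 2 : ℝ) := by
    convert eLpNorm_le_eLpNorm_mul_rpow_measure_univ one_le_two hf using 2
    norm_num
  have hfin : eLpNorm f 2 μ * μ Set.univ ^ (1 / 2 : ℝ) ≠ ∞ :=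
    ENNReal.mul_ne_top (Lp.eLpNorm_ne_top f)
      (ENNReal.rpow_ne_top_of_nonneg (by norm_num) (measure_ne_top _ _))
  calc ∫ x, ‖f x‖ ∂μ = (eLpNorm f 1 μ).toReal := by
        rw [integral_norm_eq_lintegral_enorm hf, eLpNorm_one_eq_lintegral_enorm]
    _ ≤ (eLpNorm f 2 μ * μ Set.univ ^ (1 / 2 : ℝ)).toReal := ENNReal.toReal_mono hfin hle
    _ = √(μ.real Set.univ) * ‖f‖ := by
      rw [ENNReal.toReal_mul, ← ENNReal.toReal_rpow, Lp.norm_def, Real.sqrt_eq_rpow, mul_comm]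
      rfl

/-- This is the equality case of the Cauchy–Schwarz inequality for `w` and `1`. -/
theorem ae_eq_one_of_integral_sq_le_of_le_integral [IsFiniteMeasure μ] {w : α → ℝ}
    (hw : MemLp w 2 μ) (hsq : ∫ x, w x ^ 2 ∂μ ≤ μ.real Set.univ)
    (hge : μ.real Set.univ ≤ ∫ x, w x ∂μ) : ∀ᵐ x ∂μ, w x = 1 := by
  have hlin : Integrable (fun x ↦ 1 - 2 * w x) μ :=
    (integrable_const _).sub ((hw.integrable one_le_two).const_mul 2)
  have hexpand : ∫ x, (1 - w x) ^ 2 ∂μ =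
      μ.real Set.univ - 2 * ∫ x, w x ∂μ + ∫ x, w x ^ 2 ∂μ := by
    calc ∫ x, (1 - w x) ^ 2 ∂μ = ∫ x, (1 - 2 * w x + w x ^ 2) ∂μ := by
          congr 1 with x
          ring
      _ = _ := by
        rw [integral_add hlin hw.integrable_sq, integral_sub (integrable_const _)
          ((hw.integrable one_le_two).const_mul 2), integral_const_mul]
        simp
  have hzero : ∫ x, (1 - w x) ^ 2 ∂μ = 0 :=
    le_antisymm (by linarith) (integral_nonneg fun x ↦ sq_nonneg _)
  have hint : Integrable (fun x ↦ (1 - w x) ^ 2) μ := ((memLp_const 1).sub hw).integrable_sq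
  filter_upwards [(integral_eq_zero_iff_of_nonneg (fun x ↦ sq_nonneg _) hint).1 hzero] with x hx
  exact (sub_eq_zero.1 (pow_eq_zero_iff two_ne_zero |>.1 hx)).symm

variable {X 𝕜 : Type*} [TopologicalSpace X] [CompactSpace X] [RCLike 𝕜] [MeasurableSpace X]

theorem norm_le_integral_norm {τ : C(X, 𝕜) →L[𝕜] 𝕜} {μ : Measure X} {u : X → 𝕜}
    (hu : Integrable u μ) (hτ : ∀ f : C(X, 𝕜), τ f = ∫ x, f x * u x ∂μ) :
    ‖τ‖ ≤ ∫ x, ‖u x‖ ∂μ := by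
  refine τ.opNorm_le_bound (by positivity) fun f ↦ ?_
  calc ‖τ f‖ ≤ ∫ x, ‖f‖ * ‖u x‖ ∂μ := by
        rw [hτ]
        refine norm_integral_le_of_norm_le (hu.norm.const_mul _) (.of_forall fun x ↦ ?_)
        rw [norm_mul]
        gcongr
        exact f.norm_coe_le_norm x
    _ = (∫ x, ‖u x‖ ∂μ) * ‖f‖ := by rw [integral_const_mul, mul_comm]

variable [T2Space X] [BorelSpace X]

theorem exists_norm_sq_le_and_apply_eq_integral {μ : Measure X} [μ.Regular]
    {τ : C(X, 𝕜) →L[𝕜] 𝕜} (hτ : ∀ f : C(X, 𝕜), ‖τ f‖ ≤ ∫ x, ‖f x‖ ∂μ) :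
    ∃ u : Lp 𝕜 2 μ, ‖u‖ ^ 2 ≤ μ.real Set.univ ∧ ∀ f : C(X, 𝕜), τ f = ∫ x, f x * u x ∂μ := by
  let L : C(X, 𝕜) →L[𝕜] Lp 𝕜 2 μ := ContinuousMap.toLp 2 μ 𝕜
  have hL (f : C(X, 𝕜)) : L f =ᵐ[μ] f := ContinuousMap.coeFn_toLp μ f
  have hbound (f : C(X, 𝕜)) : ‖τ f‖ ≤ √(μ.real Set.univ) * ‖L f‖ :=
    calc ‖τ f‖ ≤ ∫ x, ‖L f x‖ ∂μ :=
          (hτ f).trans_eq (integral_congr_ae ((hL f).fun_comp norm).symm)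
      _ ≤ √(μ.real Set.univ) * ‖L f‖ := integral_norm_le_sqrt_mul_norm _
  obtain ⟨k, hk, hτk⟩ := exists_norm_le_and_apply_eq_inner (L := L.toLinearMap)
    (τ := τ.toLinearMap) (ContinuousMap.toLp_denseRange 𝕜 μ 𝕜 (by norm_num))
    (Real.sqrt_nonneg _) hbound
  refine ⟨star k, ?_, fun f ↦ (hτk f).trans ?_⟩
  · calc ‖star k‖ ^ 2 = ‖k‖ ^ 2 := by
          rw [Lp.norm_def, eLpNorm_congr_ae (Lp.coeFn_star k), eLpNorm_star, ← Lp.norm_def]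
      _ ≤ √(μ.real Set.univ) ^ 2 := by gcongr
      _ = μ.real Set.univ := Real.sq_sqrt measureReal_nonneg
  · rw [L2.inner_def]
    refine integral_congr_ae ?_
    filter_upwards [hL f, Lp.coeFn_star k] with x hf hk
    rw [hk]
    simp [RCLike.inner_apply, hf]

theorem exists_polarForm (τ : C(X, 𝕜) →L[𝕜] 𝕜) :
    ∃ (μ : Measure X) (u : Lp 𝕜 2 μ), μ.Regular ∧ (∀ᵐ x ∂μ, ‖u x‖ = 1) ∧
      μ.real Set.univ = ‖τ‖ ∧ ∀ f : C(X, 𝕜), τ f = ∫ x, f x * u x ∂μ := by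
  obtain ⟨μ, hreg, hmass, hdom⟩ := exists_regular_norm_apply_le_integral_norm τ
  obtain ⟨u, hu, hτu⟩ := exists_norm_sq_le_and_apply_eq_integral hdom
  have hnorm : ‖τ‖ ≤ ∫ x, ‖u x‖ ∂μ :=
    norm_le_integral_norm ((Lp.memLp u).integrable one_le_two) hτu
  have hu_one : ∀ᵐ x ∂μ, ‖u x‖ = 1 :=
    ae_eq_one_of_integral_sq_le_of_le_integral (Lp.memLp u).norm
      ((integral_norm_sq_eq_norm_sq u).trans_le hu) (hmass.trans hnorm)
  refine ⟨μ, u, hreg, hu_one, hmass.antisymm (hnorm.trans_eq ?_), hτu⟩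
  simp [integral_congr_ae hu_one]

end PolarForm

section Innovation

variable {𝕜 E : Type*} [RCLike 𝕜] [NormedAddCommGroup E] [InnerProductSpace 𝕜 E]

variable (𝕜) in
/-- The closed linear span of `x n, x (n + 1), …`. For the monomials in `L²(μ)` these are the
subspaces `zⁿ H²(μ)`. -/
def closedTail (x : ℤ → E) (n : ℤ) : Submodule 𝕜 E :=
  (Submodule.span 𝕜 (x '' Set.Ici n)).topologicalClosure

theorem mem_closedTail (x : ℤ → E) {m n : ℤ} (h : n ≤ m) : x m ∈ closedTail 𝕜 x n :=
  Submodule.le_topologicalClosure _ (Submodule.subset_span (Set.mem_image_of_mem x h))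

theorem closedTail_le {x : ℤ → E} {n : ℤ} {V : Submodule 𝕜 E} (hV : IsClosed (V : Set E))
    (h : ∀ m, n ≤ m → x m ∈ V) : closedTail 𝕜 x n ≤ V :=
  Submodule.topologicalClosure_minimal _
    (Submodule.span_le.2 (Set.image_subset_iff.2 h)) hV

theorem isClosed_closedTail (x : ℤ → E) (n : ℤ) : IsClosed (closedTail 𝕜 x n : Set E) :=
  Submodule.isClosed_topologicalClosure _

theorem closedTail_antitone (x : ℤ → E) : Antitone (closedTail 𝕜 x) := fun _ _ h ↦
  closedTail_le (isClosed_closedTail x _) fun _ hm ↦ mem_closedTail x (h.trans hm)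

theorem map_mem_closedTail {x : ℤ → E} {T : E →L[𝕜] E} {j n : ℤ} (hT : ∀ m, T (x m) = x (j + m))
    {v : E} (hv : v ∈ closedTail 𝕜 x n) : T v ∈ closedTail 𝕜 x (j + n) :=
  closedTail_le (V := (closedTail 𝕜 x (j + n)).comap T.toLinearMap)
    ((isClosed_closedTail x _).preimage T.continuous)
    (fun m hm ↦ show T (x m) ∈ closedTail 𝕜 x (j + n) from
      hT m ▸ mem_closedTail x (Int.add_le_add_left hm j)) hv

variable [CompleteSpace E]

instance (x : ℤ → E) (n : ℤ) : (closedTail 𝕜 x n).HasOrthogonalProjection :=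
  have : CompleteSpace (closedTail 𝕜 x n) := (isClosed_closedTail x n).completeSpace_coe
  inferInstance

variable (𝕜) in
/-- The innovation of the sequence `x` at time `n` in the sense of Wold and Kolmogorov, for time
running backwards: the component of `x n` orthogonal to all `x m` with `m > n`. -/
noncomputable def innovation (x : ℤ → E) (n : ℤ) : E :=
  x n - (closedTail 𝕜 x (n + 1)).starProjection (x n)

theorem innovation_mem_orthogonal (x : ℤ → E) (n : ℤ) :
    innovation 𝕜 x n ∈ (closedTail 𝕜 x (n + 1))ᗮ :=
  Submodule.sub_starProjection_mem_orthogonal _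

theorem sub_innovation_mem_closedTail (x : ℤ → E) (n : ℤ) :
    x n - innovation 𝕜 x n ∈ closedTail 𝕜 x (n + 1) := by
  rw [innovation, sub_sub_cancel]
  exact Submodule.starProjection_apply_mem _ _

theorem innovation_mem_closedTail (x : ℤ → E) (n : ℤ) : innovation 𝕜 x n ∈ closedTail 𝕜 x n :=
  sub_mem (mem_closedTail x le_rfl)
    (closedTail_antitone x (Int.le_add_one le_rfl) (Submodule.starProjection_apply_mem _ _))

theorem forall_mem_of_innovation_mem {x : ℤ → E} {N : ℤ} {W : Submodule 𝕜 E}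
    (hW : IsClosed (W : Set E)) (htail : closedTail 𝕜 x N ≤ W)
    (hinnov : ∀ n < N, innovation 𝕜 x n ∈ W) (n : ℤ) : x n ∈ W := by
  rcases le_total N n with hn | hn
  · exact htail (mem_closedTail x hn)
  · suffices closedTail 𝕜 x n ≤ W from this (mem_closedTail x le_rfl)
    induction n, hn using Int.leInductionDown with
    | base => exact htail
    | pred n hn ih =>
      refine closedTail_le hW fun m hm ↦ ?_
      rcases hm.eq_or_lt with rfl | hm
      · rw [← add_sub_cancel (innovation 𝕜 x (n - 1)) (x (n - 1))]
        refine W.add_mem (hinnov _ (by lia)) (ih ?_)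
        simpa only [sub_add_cancel] using sub_innovation_mem_closedTail (𝕜 := 𝕜) x (n - 1)
      · exact ih (mem_closedTail x (Int.sub_one_lt_iff.1 hm))

theorem orthogonal_closedTail_le {x : ℤ → E}
    (hx : Dense (Submodule.span 𝕜 (Set.range x) : Set E)) {N : ℤ} {V : Submodule 𝕜 E}
    (hV : IsClosed (V : Set E)) (hinnov : ∀ n < N, innovation 𝕜 x n ∈ V) :
    (closedTail 𝕜 x N)ᗮ ≤ V := by
  intro k hk
  let D : Submodule 𝕜 E := V ⊓ (closedTail 𝕜 x N)ᗮ
  have hD : IsClosed (D : Set E) := hV.inter (Submodule.isClosed_orthogonal _)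
  have : CompleteSpace D := hD.completeSpace_coe
  have hinnovD (n : ℤ) (hn : n < N) : innovation 𝕜 x n ∈ D :=
    ⟨hinnov n hn, Submodule.orthogonal_le (closedTail_antitone x (Int.add_one_le_iff.2 hn))
      (innovation_mem_orthogonal x n)⟩
  let r : E := k - D.starProjection k
  have hrD : r ∈ Dᗮ := Submodule.sub_starProjection_mem_orthogonal k
  have hrtail : r ∈ (closedTail 𝕜 x N)ᗮ :=
    sub_mem hk (inf_le_right (a := V) (D.starProjection_apply_mem k))
  have hrx (n : ℤ) : x n ∈ (𝕜 ∙ r)ᗮ :=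
    forall_mem_of_innovation_mem (Submodule.isClosed_orthogonal _)
      (fun v hv ↦ Submodule.mem_orthogonal_singleton_iff_inner_left.2 (hrtail v hv))
      (fun n hn ↦ Submodule.mem_orthogonal_singleton_iff_inner_left.2 (hrD _ (hinnovD n hn))) n
  have hspan : Submodule.span 𝕜 (Set.range x) ≤ (𝕜 ∙ r)ᗮ :=
    Submodule.span_le.2 (Set.range_subset_iff.2 hrx)
  have hr : r = 0 := hx.eq_zero_of_inner_right 𝕜 fun v hv ↦
    Submodule.mem_orthogonal_singleton_iff_inner_left.1 (hspan hv)
  exact (sub_eq_zero.1 hr ▸ D.starProjection_apply_mem k : k ∈ D).1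

end Innovation

section Monomials

/-- The monomial `z ↦ z ^ n`, `n ∈ ℤ`, as a continuous function on the unit circle. -/
noncomputable def circleMonomial (n : ℤ) : C(Circle, ℂ) :=
  ⟨fun z ↦ (z : ℂ) ^ n, by fun_prop (disch := simp)⟩

theorem circleMonomial_apply (n : ℤ) (z : Circle) : circleMonomial n z = (z : ℂ) ^ n := rfl

theorem circleMonomial_add_apply (m n : ℤ) (z : Circle) :
    circleMonomial (m + n) z = circleMonomial m z * circleMonomial n z :=
  zpow_add₀ z.coe_ne_zero m n

theorem circleMonomial_neg_apply (n : ℤ) (z : Circle) :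
    circleMonomial (-n) z = conj (circleMonomial n z) := by
  rw [circleMonomial_apply, circleMonomial_apply, zpow_neg, ← inv_zpow, map_zpow₀,
    ← Circle.coe_inv, Circle.coe_inv_eq_conj]

theorem span_circleMonomial_closure_eq_top :
    (Submodule.span ℂ (Set.range circleMonomial)).topologicalClosure = ⊤ := by
  let e : AddCircle (1 : ℝ) ≃ₜ Circle := AddCircle.homeomorphCircle one_ne_zero
  let pullback : C(AddCircle (1 : ℝ), ℂ) →L[ℂ] C(Circle, ℂ) :=
    ⟨(ContinuousMap.compRightAlgHom ℂ ℂ (e.symm : C(Circle, AddCircle (1 : ℝ)))).toLinearMap,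
      ContinuousMap.compRightAlgHom_continuous ℂ ℂ _⟩
  have hfourier (n : ℤ) : pullback (fourier n) = circleMonomial n := by
    ext z
    calc (AddCircle.toCircle (n • e.symm z) : ℂ) = ((e (e.symm z) ^ n : Circle) : ℂ) := by
          rw [AddCircle.toCircle_zsmul, ← AddCircle.homeomorphCircle_apply one_ne_zero]
      _ = circleMonomial n z := by rw [e.apply_symm_apply, Circle.coe_zpow, circleMonomial_apply]
  have hsurj : Function.Surjective pullback := fun f ↦
    ⟨f.comp e, ContinuousMap.ext fun z ↦ congrArg f (e.apply_symm_apply z)⟩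
  have h := hsurj.denseRange.topologicalClosure_map_submodule
    (span_fourier_closure_eq_top (T := 1))
  rwa [Submodule.map_span, ← Set.range_comp,
    show pullback.toLinearMap ∘ fourier = circleMonomial from funext hfourier] at h

variable [MeasurableSpace Circle] [BorelSpace Circle]

/-- The monomial `z ↦ z ^ n` as an element of `L²(μ)`. -/
noncomputable def monomialL2 (μ : Measure Circle) [IsFiniteMeasure μ] (n : ℤ) : Lp ℂ 2 μ :=
  ContinuousMap.toLp 2 μ ℂ (circleMonomial n)

theorem dense_span_monomialL2 (μ : Measure Circle) [IsFiniteMeasure μ] :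
    Dense (Submodule.span ℂ (Set.range (monomialL2 μ)) : Set (Lp ℂ 2 μ)) := by
  have htoLp : DenseRange (ContinuousMap.toLp 2 μ ℂ : C(Circle, ℂ) →L[ℂ] Lp ℂ 2 μ) :=
    ContinuousMap.toLp_denseRange ℂ μ ℂ (by norm_num)
  have h := htoLp.topologicalClosure_map_submodule span_circleMonomial_closure_eq_top
  rw [Submodule.map_span, ← Set.range_comp] at h
  exact Submodule.dense_iff_topologicalClosure_eq_top.2 h

theorem measure_ext_of_integral_circleMonomial {μ ν : Measure Circle} [IsFiniteMeasure μ]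
    [IsFiniteMeasure ν]
    (h : ∀ n, ∫ z, circleMonomial n z ∂μ = ∫ z, circleMonomial n z ∂ν) : μ = ν := by
  let I (ρ : Measure Circle) [IsFiniteMeasure ρ] : C(Circle, ℂ) →L[ℂ] ℂ :=
    (innerSL ℂ (ContinuousMap.toLp 2 ρ ℂ 1)).comp (ContinuousMap.toLp 2 ρ ℂ)
  have hI (ρ : Measure Circle) [IsFiniteMeasure ρ] (f : C(Circle, ℂ)) : I ρ f = ∫ z, f z ∂ρ := by
    simp [I, ContinuousMap.inner_toLp]
  have hIμν : I μ = I ν :=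
    ContinuousLinearMap.ext_on
      (Submodule.dense_iff_topologicalClosure_eq_top.2 span_circleMonomial_closure_eq_top)
      (Set.forall_mem_range.2 fun n ↦ by rw [hI, hI, h])
  refine ext_of_forall_integral_eq_of_IsFiniteMeasure fun f ↦ ?_
  have hf := DFunLike.congr_fun hIμν ⟨fun z ↦ (f z : ℂ), by fun_prop⟩
  rw [hI, hI] at hf
  simpa [integral_complex_ofReal] using hf

theorem integral_circleMonomial_haar (lam : Measure Circle) [lam.IsHaarMeasure] {n : ℤ}
    (hn : n ≠ 0) : ∫ z, circleMonomial n z ∂lam = 0 := by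
  refine integral_eq_zero_of_mul_left_eq_neg (g := Circle.exp (Real.pi / n)) fun z ↦ ?_
  have hrot : (Circle.exp (Real.pi / n) : ℂ) ^ n = -1 := by
    rw [← Circle.coe_zpow, ← Circle.exp_zsmul, zsmul_eq_mul,
      mul_div_cancel₀ _ (Int.cast_ne_zero.2 hn), Circle.coe_exp, Complex.exp_pi_mul_I]
  rw [circleMonomial_apply, Circle.coe_mul, mul_zpow, hrot, neg_one_mul, circleMonomial_apply]

/-- The moments of negative order are the conjugates of those of positive order. -/
theorem eq_smul_haar_of_integral_circleMonomial_eq_zero (lam : Measure Circle)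
    [lam.IsHaarMeasure] {σ : Measure Circle} [IsFiniteMeasure σ]
    (hσ : ∀ n > 0, ∫ z, circleMonomial n z ∂σ = 0) : σ = (σ Set.univ / lam Set.univ) • lam := by
  have hfin : σ Set.univ / lam Set.univ ≠ ∞ :=
    ENNReal.div_ne_top (measure_ne_top _ _) (NeZero.ne _)
  have := lam.smul_finite hfin
  refine measure_ext_of_integral_circleMonomial fun n ↦ ?_
  rw [integral_smul_measure]
  rcases lt_trichotomy n 0 with hn | rfl | hn
  · rw [integral_circleMonomial_haar lam hn.ne, smul_zero]
    calc ∫ z, circleMonomial n z ∂σ = ∫ z, conj (circleMonomial (-n) z) ∂σ := by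
          simp_rw [← circleMonomial_neg_apply, neg_neg]
      _ = 0 := by rw [integral_conj, hσ _ (by lia), map_zero]
  · have hmass : (σ Set.univ / lam Set.univ).toReal * lam.real Set.univ = σ.real Set.univ := by
      rw [Measure.real, ← ENNReal.toReal_mul,
        ENNReal.div_mul_cancel (NeZero.ne _) (measure_ne_top _ _), Measure.real]
    simp only [circleMonomial_apply, zpow_zero, integral_const, smul_smul, hmass]
  · rw [hσ n hn, integral_circleMonomial_haar lam hn.ne', smul_zero]

end Monomials

section MulL2

variable {X 𝕜 : Type*} [TopologicalSpace X] [CompactSpace X] [RCLike 𝕜] [MeasurableSpace X]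
  [BorelSpace X] (μ : Measure X) [IsFiniteMeasure μ]

/-- Multiplication by a continuous function as a bounded operator on `L²(μ)`. -/
noncomputable def mulL2 (φ : C(X, 𝕜)) : Lp 𝕜 2 μ →L[𝕜] Lp 𝕜 2 μ :=
  (ContinuousLinearMap.mul 𝕜 𝕜).holderL μ ∞ 2 2 (ContinuousMap.toLp ∞ μ 𝕜 φ)

theorem coeFn_mulL2 (φ : C(X, 𝕜)) (f : Lp 𝕜 2 μ) : mulL2 μ φ f =ᵐ[μ] fun x ↦ φ x * f x := by
  filter_upwards [(ContinuousLinearMap.mul 𝕜 𝕜).coeFn_holder (r := 2)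
    (ContinuousMap.toLp ∞ μ 𝕜 φ) f, ContinuousMap.coeFn_toLp (p := ∞) (𝕜 := 𝕜) μ φ] with x hmul hφ
  exact hmul.trans (by rw [hφ, ContinuousLinearMap.mul_apply'])

theorem mulL2_toLp (φ ψ : C(X, 𝕜)) :
    mulL2 μ φ (ContinuousMap.toLp 2 μ 𝕜 ψ) = ContinuousMap.toLp 2 μ 𝕜 (φ * ψ) := by
  ext1
  filter_upwards [coeFn_mulL2 μ φ (ContinuousMap.toLp 2 μ 𝕜 ψ),
    ContinuousMap.coeFn_toLp (p := 2) (𝕜 := 𝕜) μ ψ,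
    ContinuousMap.coeFn_toLp (p := 2) (𝕜 := 𝕜) μ (φ * ψ)] with x hmul hψ hφψ
  rw [hmul, hψ, hφψ, ContinuousMap.mul_apply]

theorem integral_withDensity_norm_sq (φ : C(X, 𝕜)) (F : Lp 𝕜 2 μ) :
    ∫ x, φ x ∂μ.withDensity (fun x ↦ ENNReal.ofReal (‖F x‖ ^ 2)) =
      inner 𝕜 F (mulL2 μ φ F) := by
  rw [integral_withDensity_eq_integral_toReal_smul (by fun_prop)
    (.of_forall fun _ ↦ ENNReal.ofReal_lt_top), L2.inner_def]
  refine integral_congr_ae ?_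
  filter_upwards [coeFn_mulL2 μ φ F] with x hx
  rw [hx, RCLike.inner_apply, mul_assoc, RCLike.mul_conj, ENNReal.toReal_ofReal (by positivity),
    RCLike.real_smul_eq_coe_mul, RCLike.ofReal_pow, mul_comm]

end MulL2

section AbsoluteContinuity

theorem mem_ker_LpToLpRestrictCLM_iff {α 𝕜 F : Type*} [MeasurableSpace α] {μ : Measure α}
    [NormedRing 𝕜] [NormedAddCommGroup F] [Module 𝕜 F] [IsBoundedSMul 𝕜 F] {p : ℝ≥0∞}
    [Fact (1 ≤ p)] {s : Set α} {f : Lp F p μ} :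
    f ∈ (LpToLpRestrictCLM α F 𝕜 μ p s).ker ↔ ∀ᵐ x ∂μ.restrict s, f x = 0 := by
  have hf := LpToLpRestrictCLM_coeFn 𝕜 s f
  rw [LinearMap.mem_ker, Lp.eq_zero_iff_ae_eq_zero]
  exact ⟨hf.symm.trans, hf.trans⟩

variable [MeasurableSpace Circle] [BorelSpace Circle] (μ : Measure Circle) [IsFiniteMeasure μ]

theorem mulL2_monomialL2 (j n : ℤ) :
    mulL2 μ (circleMonomial j) (monomialL2 μ n) = monomialL2 μ (j + n) := by
  rw [monomialL2, mulL2_toLp, monomialL2]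
  exact congrArg _ (ContinuousMap.ext fun z ↦ (circleMonomial_add_apply j n z).symm)

theorem withDensity_norm_sq_innovation_absolutelyContinuous (lam : Measure Circle)
    [lam.IsHaarMeasure] (n : ℤ) :
    μ.withDensity (fun z ↦ ENNReal.ofReal (‖innovation ℂ (monomialL2 μ) n z‖ ^ 2)) ≪ lam := by
  set F := innovation ℂ (monomialL2 μ) n
  set σ := μ.withDensity fun z ↦ ENNReal.ofReal (‖F z‖ ^ 2)
  have : IsFiniteMeasure σ :=
    isFiniteMeasure_withDensity_ofReal (Lp.memLp F).norm.integrable_sq.2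
  have hshift (j : ℤ) (hj : j > 0) :
      mulL2 μ (circleMonomial j) F ∈ closedTail ℂ (monomialL2 μ) (n + 1) :=
    closedTail_antitone _ (by lia)
      (map_mem_closedTail (mulL2_monomialL2 μ j) (innovation_mem_closedTail _ n))
  have hmoments (j : ℤ) (hj : j > 0) : ∫ z, circleMonomial j z ∂σ = 0 := by
    rw [integral_withDensity_norm_sq]
    exact Submodule.inner_left_of_mem_orthogonal (hshift j hj)
      (innovation_mem_orthogonal (monomialL2 μ) n)
  rw [eq_smul_haar_of_integral_circleMonomial_eq_zero lam hmoments]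
  exact Measure.smul_absolutelyContinuous

variable {μ}

theorem ae_restrict_innovation_eq_zero {lam : Measure Circle} [lam.IsHaarMeasure] {s : Set Circle}
    (hs : lam s = 0) (n : ℤ) : ∀ᵐ z ∂μ.restrict s, innovation ℂ (monomialL2 μ) n z = 0 := by
  have h := withDensity_norm_sq_innovation_absolutelyContinuous μ lam n hs
  rw [withDensity_apply', lintegral_eq_zero_iff (by fun_prop)] at h
  filter_upwards [h] with z hz
  exact norm_eq_zero.1 (sq_nonpos_iff _ |>.1 (ENNReal.ofReal_eq_zero.1 hz))

theorem star_mem_orthogonal_closedTail {u : Lp ℂ 2 μ}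
    (hu : ∀ n : ℕ, ∫ z, circleMonomial n z * u z ∂μ = 0) :
    star u ∈ (closedTail ℂ (monomialL2 μ) 0)ᗮ := by
  suffices closedTail ℂ (monomialL2 μ) 0 ≤ (ℂ ∙ star u)ᗮ from fun v hv ↦
    Submodule.mem_orthogonal_singleton_iff_inner_left.1 (this hv)
  refine closedTail_le (Submodule.isClosed_orthogonal _) fun m hm ↦ ?_
  lift m to ℕ using hm
  rw [Submodule.mem_orthogonal_singleton_iff_inner_right, L2.inner_def, ← hu m]
  refine integral_congr_ae ?_
  filter_upwards [Lp.coeFn_star u,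
    ContinuousMap.coeFn_toLp (p := 2) (𝕜 := ℂ) μ (circleMonomial m)] with z hstar hz
  rw [hstar, monomialL2, hz, RCLike.inner_apply, Pi.star_apply, RCLike.star_def, Complex.conj_conj]

theorem absolutelyContinuous_haar_of_integral_eq_zero {u : Lp ℂ 2 μ} (lam : Measure Circle)
    [lam.IsHaarMeasure] (hu : ∀ᵐ z ∂μ, u z ≠ 0)
    (hmoments : ∀ n : ℕ, ∫ z, circleMonomial n z * u z ∂μ = 0) : μ ≪ lam := by
  intro s hs
  have hzero : ∀ᵐ z ∂μ.restrict s, star u z = 0 := mem_ker_LpToLpRestrictCLM_iff.1 <|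
    orthogonal_closedTail_le (dense_span_monomialL2 μ)
      (LpToLpRestrictCLM Circle ℂ ℂ μ 2 s).isClosed_ker
      (fun n _ ↦ mem_ker_LpToLpRestrictCLM_iff.2 (ae_restrict_innovation_eq_zero hs n))
      (star_mem_orthogonal_closedTail hmoments)
  have hfalse : ∀ᵐ _ ∂μ.restrict s, False := by
    filter_upwards [hzero, ae_restrict_of_ae hu, ae_restrict_of_ae (Lp.coeFn_star u)]
      with z hz hne hstar
    rw [hstar, Pi.star_apply, star_eq_zero] at hz
    exact hne hz
  rwa [eventually_false_iff_eq_bot, ae_eq_bot, Measure.restrict_eq_zero] at hfalse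

end AbsoluteContinuity

/-- Corollary 3.7 of the paper, in concrete form: every bounded linear functional `τ` on
`C(𝕋)` annihilating the monomials `ζ ↦ ζ ^ n`, `n ≥ 0` (hence the disc algebra) is given
by integration against a function `g ∈ L¹(𝕋, λ)` with `‖g‖₁ = ‖τ‖`, all of whose
nonnegative Fourier-type moments `∫ ζ ^ n g dλ` vanish. -/
theorem stmt_4 [MeasurableSpace Circle] [BorelSpace Circle]
    (lam : Measure Circle) [lam.IsHaarMeasure] [IsProbabilityMeasure lam]
    (τ : C(Circle, ℂ) →L[ℂ] ℂ)
    (hann : ∀ n : ℕ, τ ⟨fun z => (z : ℂ) ^ n, by fun_prop⟩ = 0) :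
    ∃ g : Circle → ℂ, Integrable g lam ∧
      (∫ z, ‖g z‖ ∂lam) = ‖τ‖ ∧
      (∀ n : ℕ, (∫ z, (z : ℂ) ^ n * g z ∂lam) = 0) ∧
      ∀ f : C(Circle, ℂ), τ f = ∫ z, f z * g z ∂lam := by
  obtain ⟨μ, u, _, hu, hmass, hτ⟩ := exists_polarForm τ
  have hmoments (n : ℕ) : ∫ z, circleMonomial n z * u z ∂μ = 0 := by
    rw [← hτ, ← hann n]
    exact congrArg τ (ContinuousMap.ext fun z ↦ zpow_natCast (z : ℂ) n)
  have hac : μ ≪ lam := absolutelyContinuous_haar_of_integral_eq_zero lam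
    (hu.mono fun z hz ↦ norm_ne_zero_iff.1 (hz ▸ one_ne_zero)) hmoments
  have hg (f : C(Circle, ℂ)) :
      τ f = ∫ z, f z * ((μ.rnDeriv lam z).toReal • u z) ∂lam := by
    simp_rw [mul_smul_comm]
    rw [hτ, integral_rnDeriv_smul hac]
  refine ⟨fun z ↦ (μ.rnDeriv lam z).toReal • u z,
    (integrable_rnDeriv_smul_iff hac).2 ((Lp.memLp u).integrable one_le_two), ?_,
    fun n ↦ (hg _).symm.trans (hann n), hg⟩
  calc ∫ z, ‖(μ.rnDeriv lam z).toReal • u z‖ ∂lam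
      = ∫ z, (μ.rnDeriv lam z).toReal • ‖u z‖ ∂lam := by
        simp_rw [norm_smul, Real.norm_of_nonneg ENNReal.toReal_nonneg, smul_eq_mul]
    _ = ∫ z, ‖u z‖ ∂μ := integral_rnDeriv_smul hac
    _ = ‖τ‖ := by simp [integral_congr_ae hu, hmass]
end
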